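/- arXiv:2501.18396 — 4 statements merged into one kernel-verified Lean document; each statement's English description precedes it below -/
import Mathlib

section
/- Let p be a prime, 𝔽 a finite field of characteristic p, and G₁, G₂ arbitrary groups. Let V be a 2-dimensional 𝔽-vector space with an 𝔽-linear action of G₁ × G₂, and let W ⊆ V be a 1-dimensional (G₁ × G₂)-stable subspace such that G₁ × G₂ acts on W through a character η′ : G₁ × G₂ → 𝔽ˣ and on the quotient V/W through a character η : G₁ × G₂ → 𝔽ˣ. If there is no G₁-stable line W′ ⊆ V with V = W ⊕ W′ (i.e. the extension 0 → W → V → V/W → 0 does not split as a sequence of representations of G₁, acting via g ↦ (g,1)), then η(1,g) = η′(1,g) for every g ∈ G₂. In particular, if η ≠ η′, then the extension splits as a representation of G₁ or as a representation of G₂ (G₂ acting via g ↦ (1,g)). -/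
/-!
If `η x ≠ η' x` for some `x`, then `ρ x` acts on `W` and on `V ⧸ W` by two different scalars, so
its `η x`-eigenspace is a complement of `W`. Everything commuting with `x` preserves that
eigenspace, so an element of one factor of `G₁ × G₂` splits the extension over the other factor.
-/

section Splitting

variable {K V G H : Type*} [Field K] [AddCommGroup V] [Module K V] [Monoid G] [Monoid H]
  {W : Submodule K V}

theorem isCompl_eigenspace_of_ne {f : Module.End K V} {a b : K} (hab : a ≠ b)
    (hW : ∀ w ∈ W, f w = b • w) (hVW : ∀ v, f v - a • v ∈ W) : IsCompl W (f.eigenspace a) := by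
  have hle : W ≤ f.eigenspace b := fun w hw ↦ Module.End.mem_eigenspace_iff.2 (hW w hw)
  refine ⟨(f.disjoint_genEigenspace hab.symm 1 1).mono_left hle, ?_⟩
  rw [codisjoint_iff, Submodule.eq_top_iff']
  intro v
  -- `(f - b) (f - a) = 0`, and the difference of the two factors is the unit `a - b`.
  have hmem : f v - b • v ∈ f.eigenspace a := by
    have hfv : f (f v) - a • f v = b • (f v - a • v) := by
      simpa only [map_sub, map_smul] using hW _ (hVW v)
    rw [Module.End.mem_eigenspace_iff, map_sub, map_smul, sub_eq_iff_eq_add.1 hfv]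
    module
  have hsum : (a - b) • v = -(f v - a • v) + (f v - b • v) := by module
  rw [← Submodule.smul_mem_iff _ (sub_ne_zero.2 hab), hsum]
  exact Submodule.add_mem_sup (W.neg_mem (hVW v)) hmem

/-- The extension `0 → W → V → V ⧸ W → 0` splits as a representation: `W` has a stable complement.
The restriction to a factor of a product is expressed by precomposing `ρ` with the inclusion. -/
def ExtensionSplits (ρ : Representation K G V) (W : Submodule K V) : Prop :=
  ∃ W' ∈ ρ.invtSubmodule, IsCompl W W'

theorem extensionSplits_iff_exists_finrank_eq {ρ : Representation K G V} {m n : ℕ}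
    [FiniteDimensional K V] (hV : Module.finrank K V = m + n) (hW : Module.finrank K W = m) :
    ExtensionSplits ρ W ↔ ∃ W' : Submodule K V, Module.finrank K W' = n ∧ IsCompl W W' ∧
      ∀ g, ∀ w ∈ W', ρ g w ∈ W' := by
  simp only [ExtensionSplits, Representation.mem_invtSubmodule,
    Module.End.mem_invtSubmodule_iff_forall_mem_of_mem]
  refine exists_congr fun W' ↦ ⟨fun ⟨hstable, hcompl⟩ ↦ ⟨?_, hcompl, hstable⟩,
    fun ⟨_, hcompl, hstable⟩ ↦ ⟨hstable, hcompl⟩⟩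
  have := Submodule.finrank_add_eq_of_isCompl hcompl
  lia

theorem extensionSplits_comp_of_commute {ρ : Representation K G V} {φ : H →* G} {x : G} {a b : K}
    (hx : ∀ h, Commute x (φ h)) (hab : a ≠ b) (hW : ∀ w ∈ W, ρ x w = b • w)
    (hVW : ∀ v, ρ x v - a • v ∈ W) : ExtensionSplits (ρ.comp φ) W := by
  refine ⟨Module.End.eigenspace (ρ x) a, ?_, isCompl_eigenspace_of_ne hab hW hVW⟩
  rw [Representation.mem_invtSubmodule]
  intro h
  rw [Module.End.mem_invtSubmodule_iff_mapsTo]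
  exact Module.End.mapsTo_genEigenspace_of_comm ((hx h).map ρ) a 1

end Splitting

theorem stmt0_general {K V M₁ M₂ : Type*} [Field K] [AddCommGroup V] [Module K V]
    [Monoid M₁] [Monoid M₂] {ρ : Representation K (M₁ × M₂) V} {W : Submodule K V}
    {η' η : M₁ × M₂ →* K} (hη' : ∀ g, ∀ w ∈ W, ρ g w = η' g • w)
    (hη : ∀ g v, ρ g v - η g • v ∈ W) :
    (¬ ExtensionSplits (ρ.comp (.inl M₁ M₂)) W → ∀ g, η (1, g) = η' (1, g)) ∧
    (η ≠ η' → ExtensionSplits (ρ.comp (.inl M₁ M₂)) W ∨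
      ExtensionSplits (ρ.comp (.inr M₁ M₂)) W) := by
  have eq_right (hsplit : ¬ ExtensionSplits (ρ.comp (.inl M₁ M₂)) W) (g : M₂) :
      η (1, g) = η' (1, g) := by
    contrapose! hsplit
    exact extensionSplits_comp_of_commute (fun h ↦ (MonoidHom.commute_inl_inr h g).symm) hsplit
      (hη' _) (hη _)
  have eq_left (hsplit : ¬ ExtensionSplits (ρ.comp (.inr M₁ M₂)) W) (g : M₁) :
      η (g, 1) = η' (g, 1) := by
    contrapose! hsplit
    exact extensionSplits_comp_of_commute (MonoidHom.commute_inl_inr g) hsplit (hη' _) (hη _)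
  refine ⟨eq_right, fun hne ↦ ?_⟩
  contrapose! hne
  ext ⟨g₁, g₂⟩
  rw [← Prod.fst_mul_snd (g₁, g₂), map_mul, map_mul, eq_left hne.2, eq_right hne.1]

/-- Let `p` be a prime, `𝔽` a finite field of characteristic `p`, and `G₁`, `G₂` arbitrary groups.
Let `V` be a 2-dimensional `𝔽`-vector space with an `𝔽`-linear action `ρ` of `G₁ × G₂`, and
`W ⊆ V` a 1-dimensional stable subspace on which `G₁ × G₂` acts through a character `η′` and on
the quotient `V/W` through a character `η`.  If the extension `0 → W → V → V/W → 0` does not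
split as a sequence of representations of `G₁` (acting via `g ↦ (g,1)`), i.e. there is no
`G₁`-stable line `W′` complementary to `W`, then `η (1, g) = η′ (1, g)` for every `g ∈ G₂`.
In particular, if `η ≠ η′`, then the extension splits as a representation of `G₁` or as a
representation of `G₂` (acting via `g ↦ (1,g)`). -/
theorem stmt0 (p : ℕ) (hp : p.Prime) (𝔽 : Type*) [Field 𝔽] [Fintype 𝔽] [CharP 𝔽 p]
    (G₁ G₂ : Type*) [Group G₁] [Group G₂]
    (V : Type*) [AddCommGroup V] [Module 𝔽 V] (hV : Module.finrank 𝔽 V = 2)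
    (ρ : Representation 𝔽 (G₁ × G₂) V)
    (W : Submodule 𝔽 V) (hW : Module.finrank 𝔽 ↥W = 1)
    (η' η : (G₁ × G₂) →* 𝔽ˣ)
    (hWstab : ∀ g : G₁ × G₂, ∀ w ∈ W, ρ g w ∈ W)
    (hη' : ∀ g : G₁ × G₂, ∀ w ∈ W, ρ g w = (η' g : 𝔽) • w)
    (hη : ∀ (g : G₁ × G₂) (v : V), ρ g v - (η g : 𝔽) • v ∈ W) :
    ((¬ ∃ W' : Submodule 𝔽 V, Module.finrank 𝔽 ↥W' = 1 ∧ IsCompl W W' ∧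
        ∀ g : G₁, ∀ w ∈ W', ρ (g, 1) w ∈ W') →
      ∀ g : G₂, η (1, g) = η' (1, g)) ∧
    (η ≠ η' →
      (∃ W' : Submodule 𝔽 V, Module.finrank 𝔽 ↥W' = 1 ∧ IsCompl W W' ∧
        ∀ g : G₁, ∀ w ∈ W', ρ (g, 1) w ∈ W') ∨
      (∃ W' : Submodule 𝔽 V, Module.finrank 𝔽 ↥W' = 1 ∧ IsCompl W W' ∧
        ∀ g : G₂, ∀ w ∈ W', ρ (1, g) w ∈ W')) := by
  have : FiniteDimensional 𝔽 V := Module.finite_of_finrank_pos (by lia)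
  have h := stmt0_general (η' := (Units.coeHom 𝔽).comp η') (η := (Units.coeHom 𝔽).comp η) hη' hη
  simpa [extensionSplits_iff_exists_finrank_eq (m := 1) (n := 1) hV hW,
    Units.val_inj, MonoidHom.cancel_left Units.coeHom_injective] using h
end

section
/- Let p be a prime, 𝔽 a finite field of characteristic p, Δ a finite index set, and (G_α)_{α∈Δ} a family of groups; set G := ∏_{α∈Δ} G_α. Let V be a 2-dimensional 𝔽-vector space with an 𝔽-linear G-action and W ⊆ V a 1-dimensional G-stable subspace such that G acts on W through a character η′ : G → 𝔽ˣ and on V/W through a character η : G → 𝔽ˣ. Regard each G_α as a subgroup of G via the α-th coordinate embedding. Then: (a) if for some α ∈ Δ the extension 0 → W → V → V/W → 0 does not split as a sequence of G_α-representations (i.e. there is no G_α-stable line complementary to W), then η and η′ have equal restrictions to G_β for every β ∈ Δ with β ≠ α; (b) consequently, if η ≠ η′, then there is at most one α ∈ Δ such that the restriction of V to G_α does not split. -/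
/-- The extension `0 → W → V → V/W → 0` splits as a representation of the `α`-th factor `G α`
(embedded in `∏ β, G β` via `Pi.mulSingle`): there is a `G α`-stable line `W'` complementary
to `W`. -/
def SplitsAt {𝔽 : Type*} [Field 𝔽] {Δ : Type*} [DecidableEq Δ] {G : Δ → Type*}
    [∀ α, Group (G α)] {V : Type*} [AddCommGroup V] [Module 𝔽 V]
    (ρ : Representation 𝔽 (∀ α, G α) V) (W : Submodule 𝔽 V) (α : Δ) : Prop :=
  ∃ W' : Submodule 𝔽 V, Module.finrank 𝔽 ↥W' = 1 ∧ IsCompl W W' ∧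
    ∀ g : G α, ∀ w ∈ W', ρ (Pi.mulSingle α g) w ∈ W'

/-!
If `h ∈ G β` satisfies `η h ≠ η' h`, then `ρ h` acts on `W` and on `V/W` by different
scalars, so `V` is the direct sum of `W` and the `η h`-eigenspace of `ρ h`. This eigenspace is
stable under everything that commutes with `h`, in particular under `G α` for each `α ≠ β`. Two
distinct non-split indices would therefore force `η = η'` on all factors, hence on the finite
product.
-/

section Eigenspace

variable {R M : Type*} [CommRing R] [AddCommGroup M] [Module R M]

lemma isCompl_eigenspace_of_sub_smul_mem {f : Module.End R M} {N : Submodule R M} {a b : R}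
    (hab : IsUnit (b - a)) (hN : ∀ x ∈ N, f x = a • x) (hquot : ∀ x, f x - b • x ∈ N) :
    IsCompl N (f.eigenspace b) := by
  constructor
  · rw [Submodule.disjoint_def]
    intro x hxN hxb
    have hsmul : b • x = a • x := (Module.End.mem_eigenspace_iff.1 hxb).symm.trans (hN x hxN)
    rw [← hab.smul_eq_zero, sub_smul, hsmul, sub_self]
  · rw [codisjoint_iff, Submodule.eq_top_iff']
    intro x
    have hfx : f (f x - a • x) = b • (f x - a • x) := by
      have hkill := hN _ (hquot x)
      simp only [map_sub, map_smul] at hkill ⊢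
      linear_combination (norm := module) hkill
    have hdecomp : (b - a) • x = -(f x - b • x) + (f x - a • x) := by module
    rw [← Submodule.smul_mem_iff_of_isUnit _ hab, hdecomp]
    exact Submodule.add_mem_sup (N.neg_mem (hquot x)) (Module.End.mem_eigenspace_iff.2 hfx)

end Eigenspace

section Product

variable {𝔽 : Type*} [Field 𝔽] {Δ : Type*} [DecidableEq Δ] {G : Δ → Type*}
  [∀ α, Group (G α)] {V : Type*} [AddCommGroup V] [Module 𝔽 V]
  {ρ : Representation 𝔽 (∀ α, G α) V} {W : Submodule 𝔽 V}

lemma splitsAt_of_mulSingle_scalars_ne {α β : Δ} (hβα : β ≠ α) (hVW : Module.finrank 𝔽 (V ⧸ W) = 1)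
    {g : G β} {a b : 𝔽} (hab : b ≠ a) (hW : ∀ w ∈ W, ρ (Pi.mulSingle β g) w = a • w)
    (hquot : ∀ v, ρ (Pi.mulSingle β g) v - b • v ∈ W) : SplitsAt ρ W α := by
  have hcompl : IsCompl W (Module.End.eigenspace (ρ (Pi.mulSingle β g)) b) :=
    isCompl_eigenspace_of_sub_smul_mem (sub_ne_zero.2 hab).isUnit hW hquot
  refine ⟨_, ?_, hcompl, fun h => ?_⟩
  · rw [← (Submodule.quotientEquivOfIsCompl _ _ hcompl).finrank_eq, hVW]
  · exact Module.End.mapsTo_genEigenspace_of_comm ((Pi.mulSingle_commute hβα g h).map ρ) b 1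

lemma apply_mulSingle_eq_of_not_splitsAt {η' η : (∀ α, G α) →* 𝔽ˣ}
    (hVW : Module.finrank 𝔽 (V ⧸ W) = 1) (hη' : ∀ g, ∀ w ∈ W, ρ g w = (η' g : 𝔽) • w)
    (hη : ∀ g v, ρ g v - (η g : 𝔽) • v ∈ W) {α β : Δ} (hα : ¬ SplitsAt ρ W α) (hβα : β ≠ α)
    (g : G β) : η (Pi.mulSingle β g) = η' (Pi.mulSingle β g) := by
  by_contra hne
  exact hα (splitsAt_of_mulSingle_scalars_ne hβα hVW (mt Units.ext hne) (hη' _) (hη _))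

theorem stmt1_general [Finite Δ] {η' η : (∀ α, G α) →* 𝔽ˣ}
    (hVW : Module.finrank 𝔽 (V ⧸ W) = 1) (hη' : ∀ g, ∀ w ∈ W, ρ g w = (η' g : 𝔽) • w)
    (hη : ∀ g v, ρ g v - (η g : 𝔽) • v ∈ W) :
    (∀ α : Δ, ¬ SplitsAt ρ W α → ∀ β : Δ, β ≠ α → ∀ g : G β,
      η (Pi.mulSingle β g) = η' (Pi.mulSingle β g)) ∧
    (η ≠ η' → {α : Δ | ¬ SplitsAt ρ W α}.Subsingleton) := by
  have heq {α : Δ} (hα : ¬ SplitsAt ρ W α) (β : Δ) (hβα : β ≠ α) (g : G β) :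
      η (Pi.mulSingle β g) = η' (Pi.mulSingle β g) :=
    apply_mulSingle_eq_of_not_splitsAt hVW hη' hη hα hβα g
  refine ⟨fun _ => heq, fun hne α hα β hβ => by_contra fun hαβ => hne ?_⟩
  refine MonoidHom.pi_ext fun γ g => ?_
  by_cases hγα : γ = α
  · exact heq hβ γ (hγα ▸ hαβ) g
  · exact heq hα γ hγα g

end Product

/-- Let `p` be a prime, `𝔽` a finite field of characteristic `p`, `Δ` a finite index set and
`(G α)_{α ∈ Δ}` a family of groups; set `G := ∏ α, G α`.  Let `V` be a 2-dimensional
`𝔽`-vector space with an `𝔽`-linear `G`-action `ρ` and `W ⊆ V` a 1-dimensional stable subspace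
on which `G` acts through a character `η′` and on `V/W` through a character `η`.  Then:
(a) if for some `α ∈ Δ` the extension `0 → W → V → V/W → 0` does not split as a sequence of
`G α`-representations, then `η` and `η′` have equal restrictions to `G β` for every `β ≠ α`;
(b) if `η ≠ η′`, there is at most one `α ∈ Δ` such that the restriction of `V` to `G α` does
not split. -/
theorem stmt1 (p : ℕ) (hp : p.Prime) (𝔽 : Type*) [Field 𝔽] [Fintype 𝔽] [CharP 𝔽 p]
    (Δ : Type*) [Fintype Δ] [DecidableEq Δ] (G : Δ → Type*) [∀ α, Group (G α)]
    (V : Type*) [AddCommGroup V] [Module 𝔽 V] (hV : Module.finrank 𝔽 V = 2)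
    (ρ : Representation 𝔽 (∀ α, G α) V)
    (W : Submodule 𝔽 V) (hW : Module.finrank 𝔽 ↥W = 1)
    (η' η : (∀ α, G α) →* 𝔽ˣ)
    (hWstab : ∀ g : ∀ α, G α, ∀ w ∈ W, ρ g w ∈ W)
    (hη' : ∀ g : ∀ α, G α, ∀ w ∈ W, ρ g w = (η' g : 𝔽) • w)
    (hη : ∀ (g : ∀ α, G α) (v : V), ρ g v - (η g : 𝔽) • v ∈ W) :
    (∀ α : Δ, ¬ SplitsAt ρ W α → ∀ β : Δ, β ≠ α → ∀ g : G β,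
      η (Pi.mulSingle β g) = η' (Pi.mulSingle β g)) ∧
    (η ≠ η' → {α : Δ | ¬ SplitsAt ρ W α}.Subsingleton) := by
  have : Module.Finite 𝔽 V := Module.finite_of_finrank_eq_succ hV
  exact stmt1_general (by rw [W.finrank_quotient, hV, hW]) hη' hη
end

section
/- Let p be a prime, n ≥ 1, and fix a composition n = n₁ + … + n_r. Let P ≤ GL_n(ℚ_p) be the corresponding standard parabolic subgroup of invertible block upper triangular matrices, L ≤ P its Levi subgroup of invertible block diagonal matrices, and U ⊴ P its unipotent radical consisting of block upper triangular matrices whose diagonal blocks are identity matrices. Let F/ℚ_p be a finite field extension with ring of integers 𝒪_F and uniformizer ϖ, and let h ≥ 1. Let π be a smooth representation of P on an 𝒪_F/ϖ^h-module such that, as a representation of L by restriction along L ↪ P, π is admissible and of finite length. Then the unipotent radical U acts trivially on π: u·x = x for all u ∈ U and x ∈ π. -/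
/-!
Let `z` be a central element of `L` that is a different scalar on each block, with absolute values
increasing along the blocks, so that `z ^ N * u * (z ^ N)⁻¹ → 1` for every `u ∈ U`. A vector `x` is
fixed by some compact open subgroup `C ≤ L`, and since `z` is central all the vectors `z ^ N • x`
are fixed by `C` too. By admissibility `π ^ C` is finitely generated, so by smoothness a single
neighbourhood of `1` in `P` fixes it pointwise. This neighbourhood contains
`z ^ N * u * (z ^ N)⁻¹` for large `N`; as this element fixes `z ^ N • x`, the element `u` fixes `x`.
-/

open Filter Topology Matrix

/-! ### Smooth and admissible representations -/

section Representations

variable {k G H V : Type*} [Semiring k] [AddCommMonoid V] [Module k V] [Group G] [Group H]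

/-- The subgroup of `G` fixing the vector `x` of a representation. -/
def vectorStabilizer (ρ : Representation k G V) (x : V) : Subgroup G :=
  (MulAction.stabilizer (Module.End k V)ˣ x).comap ρ.toHomUnits

theorem mem_vectorStabilizer {ρ : Representation k G V} {x : V} {g : G} :
    g ∈ vectorStabilizer ρ x ↔ ρ g x = x :=
  Iff.rfl

/-- The submodule `V ^ C` of vectors fixed by every element of the subgroup `C`. -/
def fixedVectors (ρ : Representation k G V) (C : Subgroup G) : Submodule k V :=
  ⨅ g ∈ C, LinearMap.eqLocus (ρ g) LinearMap.id

theorem mem_fixedVectors {ρ : Representation k G V} {C : Subgroup G} {x : V} :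
    x ∈ fixedVectors ρ C ↔ ∀ g ∈ C, ρ g x = x := by
  simp [fixedVectors]

theorem apply_mem_fixedVectors_of_mem_center {ρ : Representation k G V} {C : Subgroup G} {x : V}
    (hx : x ∈ fixedVectors ρ C) {z : G} (hz : z ∈ Subgroup.center G) :
    ρ z x ∈ fixedVectors ρ C := by
  rw [mem_fixedVectors] at hx ⊢
  intro g hg
  rw [← Module.End.mul_apply, ← map_mul, Subgroup.mem_center_iff.1 hz g, map_mul,
    Module.End.mul_apply, hx g hg]

variable [TopologicalSpace G] [TopologicalSpace H]

/-- A representation of a topological group is smooth if every vector has open stabilizer. -/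
def IsSmoothRepresentation (ρ : Representation k G V) : Prop :=
  ∀ x : V, IsOpen {g : G | ρ g x = x}

/-- A representation of a topological group is admissible if the vectors fixed by any compact open
subgroup form a finitely generated module. Smoothness is not part of the definition. -/
def IsAdmissibleRepresentation (ρ : Representation k G V) : Prop :=
  ∀ C : Subgroup G, IsOpen (C : Set G) → IsCompact (C : Set G) → (fixedVectors ρ C).FG

theorem IsSmoothRepresentation.comp {ρ : Representation k G V} (hρ : IsSmoothRepresentation ρ)
    {φ : H →* G} (hφ : Continuous φ) : IsSmoothRepresentation (ρ.comp φ) :=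
  fun x => (hρ x).preimage hφ

theorem IsSmoothRepresentation.eventually_forall_mem_apply_eq {ρ : Representation k G V}
    (hρ : IsSmoothRepresentation ρ) {W : Submodule k V} (hW : W.FG) :
    ∀ᶠ g in 𝓝 (1 : G), ∀ x ∈ W, ρ g x = x := by
  obtain ⟨T, rfl⟩ := hW
  have fixes_generators : ∀ᶠ g in 𝓝 (1 : G), ∀ t ∈ T, ρ g t = t :=
    (eventually_all_finset T).2 fun t _ => (hρ t).mem_nhds (by simp)
  filter_upwards [fixes_generators] with g hg
  have span_le : Submodule.span k (T : Set V) ≤ LinearMap.eqLocus (ρ g) LinearMap.id :=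
    Submodule.span_le.2 hg
  exact span_le

theorem IsSmoothRepresentation.apply_eq_self_of_tendsto_conj {ρ : Representation k G V}
    (hρ : IsSmoothRepresentation ρ) {W : Submodule k V} (hW : W.FG) {ι : Type*} {l : Filter ι}
    [l.NeBot] {a : ι → G} {g : G} (ha : Tendsto (fun i => a i * g * (a i)⁻¹) l (𝓝 1)) {x : V}
    (hx : ∀ i, ρ (a i) x ∈ W) : ρ g x = x := by
  obtain ⟨i, hi⟩ := (ha.eventually (hρ.eventually_forall_mem_apply_eq hW)).exists
  have conj_fixes : ρ (a i * g * (a i)⁻¹) (ρ (a i) x) = ρ (a i) x := hi _ (hx i)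
  rw [map_mul, map_mul, Module.End.mul_apply, Module.End.mul_apply, ρ.inv_self_apply] at conj_fixes
  exact (ρ.apply_bijective (a i)).injective conj_fixes

theorem IsAdmissibleRepresentation.exists_fg_forall_mem_center_apply_mem [ContinuousMul G]
    {ρ : Representation k G V} (hadm : IsAdmissibleRepresentation ρ)
    (hρ : IsSmoothRepresentation ρ) {C : Subgroup G} (hCo : IsOpen (C : Set G))
    (hCc : IsCompact (C : Set G)) (x : V) :
    ∃ W : Submodule k V, W.FG ∧ ∀ z ∈ Subgroup.center G, ρ z x ∈ W := by
  have stabilizer_open : IsOpen (vectorStabilizer ρ x : Set G) := hρ x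
  refine ⟨fixedVectors ρ (C ⊓ vectorStabilizer ρ x), hadm _ (hCo.inter stabilizer_open)
    (hCc.inter_right (Subgroup.isClosed_of_isOpen _ stabilizer_open)), fun z hz => ?_⟩
  exact apply_mem_fixedVectors_of_mem_center
    (mem_fixedVectors.2 fun _ hg => mem_vectorStabilizer.1 (Subgroup.mem_inf.1 hg).2) hz

theorem apply_eq_self_of_admissible_comp_of_tendsto_conj [ContinuousMul H]
    {ρ : Representation k G V} (hρ : IsSmoothRepresentation ρ) {φ : H →* G} (hφ : Continuous φ)
    (hadm : IsAdmissibleRepresentation (ρ.comp φ)) {C : Subgroup H} (hCo : IsOpen (C : Set H))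
    (hCc : IsCompact (C : Set H)) {z : H} (hz : z ∈ Subgroup.center H) {g : G}
    (hg : Tendsto (fun N : ℕ => φ z ^ N * g * (φ z ^ N)⁻¹) atTop (𝓝 1)) (x : V) :
    ρ g x = x := by
  obtain ⟨W, hW, hWx⟩ := hadm.exists_fg_forall_mem_center_apply_mem (hρ.comp hφ) hCo hCc x
  refine hρ.apply_eq_self_of_tendsto_conj hW hg fun N => ?_
  rw [← map_pow]
  exact hWx (z ^ N) (pow_mem hz N)

end Representations

/-! ### Parabolic subgroups, Levi subgroups and unipotent radicals -/

section BlockSubgroups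

variable {R ι α : Type*} [CommRing R] [Fintype ι] [DecidableEq ι] [LinearOrder α]

/-- The parabolic subgroup of invertible block upper triangular matrices, where `f i` is the block
containing the index `i`. -/
def parabolicSubgroup (R : Type*) [CommRing R] (f : ι → α) : Subgroup (GL ι R) where
  carrier := {g | BlockTriangular (g : Matrix ι ι R) f}
  one_mem' := blockTriangular_one
  mul_mem' hg hh := hg.mul hh
  inv_mem' {g} hg := by
    have : Invertible (g : Matrix ι ι R) := g.invertible
    simpa only [Set.mem_ofPred_eq, coe_units_inv] using blockTriangular_inv_of_blockTriangular hg

/-- The Levi subgroup of invertible block diagonal matrices, as the intersection of two opposite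
parabolic subgroups. -/
def leviSubgroup (R : Type*) [CommRing R] (f : ι → α) : Subgroup (GL ι R) :=
  parabolicSubgroup R f ⊓ parabolicSubgroup R (OrderDual.toDual ∘ f)

theorem mem_leviSubgroup {f : ι → α} {g : GL ι R} :
    g ∈ leviSubgroup R f ↔ ∀ i j, f i ≠ f j → (g : Matrix ι ι R) i j = 0 := by
  refine ⟨fun hg i j hij => ?_, fun hg => ⟨fun i j hij => ?_, fun i j hij => ?_⟩⟩
  · rcases hij.lt_or_gt with hlt | hgt
    · exact hg.2 hlt
    · exact hg.1 hgt
  · exact hg i j (ne_of_gt hij)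
  · exact hg i j (ne_of_lt hij)

theorem mul_apply_eq_of_blockTriangular {f : ι → α} {A B : Matrix ι ι R}
    (hA : BlockTriangular A f) (hB : BlockTriangular B f)
    (hB1 : ∀ i j, f i = f j → B i j = (1 : Matrix ι ι R) i j) {i j : ι} (hij : f i = f j) :
    (A * B) i j = A i j := by
  have term_eq (l : ι) : A i l * B l j = A i l * (1 : Matrix ι ι R) l j := by
    rcases lt_trichotomy (f l) (f i) with hlt | heq | hgt
    · rw [hA hlt, zero_mul, zero_mul]
    · rw [hB1 l j (heq.trans hij)]
    · have hjl : f j < f l := hij ▸ hgt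
      rw [hB hjl, one_apply_ne (ne_of_apply_ne f hjl.ne')]
  calc (A * B) i j = (A * (1 : Matrix ι ι R)) i j := by simp only [mul_apply, term_eq]
    _ = A i j := by rw [Matrix.mul_one]

/-- The unipotent radical of a parabolic subgroup: the block upper triangular matrices whose
diagonal blocks are identity matrices. -/
def unipotentRadical (R : Type*) [CommRing R] (f : ι → α) : Subgroup (GL ι R) where
  carrier := {g | BlockTriangular (g : Matrix ι ι R) f ∧
    ∀ i j, f i = f j → (g : Matrix ι ι R) i j = (1 : Matrix ι ι R) i j}
  one_mem' := ⟨blockTriangular_one, fun _ _ _ => rfl⟩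
  mul_mem' hg hh := ⟨hg.1.mul hh.1, fun i j hij =>
    (mul_apply_eq_of_blockTriangular hg.1 hh.1 hh.2 hij).trans (hg.2 i j hij)⟩
  inv_mem' {g} hg := by
    have hinv := (parabolicSubgroup R f).inv_mem hg.1
    refine ⟨hinv, fun i j hij => ?_⟩
    rw [← mul_apply_eq_of_blockTriangular hinv hg.1 hg.2 hij, ← Units.val_mul, inv_mul_cancel,
      Units.val_one]

theorem mem_unipotentRadical {f : ι → α} {g : GL ι R} :
    g ∈ unipotentRadical R f ↔ BlockTriangular (g : Matrix ι ι R) f ∧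
      ∀ i j, f i = f j → (g : Matrix ι ι R) i j = (1 : Matrix ι ι R) i j :=
  Iff.rfl

/-- The diagonal torus of `GL ι R`, parametrized by its diagonal entries. -/
def diagonalGL : (ι → Rˣ) →* GL ι R :=
  (Units.map (diagonalRingHom ι R : (ι → R) →* Matrix ι ι R)).comp
    (MulEquiv.piUnits (M := fun _ : ι => R)).symm.toMonoidHom

theorem coe_diagonalGL (v : ι → Rˣ) :
    (diagonalGL v : Matrix ι ι R) = diagonal fun i => (v i : R) :=
  rfl

theorem diagonalGL_mem_leviSubgroup (f : ι → α) (v : ι → Rˣ) :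
    diagonalGL v ∈ leviSubgroup R f :=
  ⟨blockTriangular_diagonal _, blockTriangular_diagonal _⟩

theorem diagonalGL_mem_center_leviSubgroup {f : ι → α} {v : ι → Rˣ}
    (hv : ∀ i j, f i = f j → v i = v j) :
    (⟨diagonalGL v, diagonalGL_mem_leviSubgroup f v⟩ : leviSubgroup R f) ∈
      Subgroup.center (leviSubgroup R f) := by
  rw [Subgroup.mem_center_iff]
  rintro ⟨g, hg⟩
  ext i j
  change ((g : Matrix ι ι R) * diagonal fun i => (v i : R)) i j =
    ((diagonal fun i => (v i : R)) * (g : Matrix ι ι R)) i j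
  rw [mul_diagonal, diagonal_mul, mul_comm]
  by_cases hij : f i = f j
  · rw [hv i j hij]
  · rw [mem_leviSubgroup.1 hg i j hij, mul_zero, mul_zero]

theorem diagonalGL_pow_conj_apply (v : ι → Rˣ) (g : GL ι R) (N : ℕ) (i j : ι) :
    ((diagonalGL v ^ N * g * (diagonalGL v ^ N)⁻¹ : GL ι R) : Matrix ι ι R) i j =
      ((v i / v j : Rˣ) : R) ^ N * (g : Matrix ι ι R) i j := by
  rw [← map_pow, ← map_inv, Units.val_mul, Units.val_mul, coe_diagonalGL, coe_diagonalGL,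
    mul_diagonal, diagonal_mul, mul_right_comm, ← Units.val_mul, ← Units.val_pow_eq_pow_val,
    div_pow, div_eq_mul_inv]
  rfl

theorem isClosed_leviSubgroup [TopologicalSpace R] [T1Space R] (f : ι → α) :
    IsClosed (leviSubgroup R f : Set (GL ι R)) := by
  have eq_iInter : (leviSubgroup R f : Set (GL ι R)) =
      ⋂ (i) (j) (_ : f i ≠ f j), {g : GL ι R | (g : Matrix ι ι R) i j = 0} := by
    ext g
    simp [mem_leviSubgroup]
  rw [eq_iInter]
  exact isClosed_iInter fun i => isClosed_iInter fun j => isClosed_iInter fun _ =>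
    isClosed_singleton.preimage (Units.continuous_val.matrix_elem i j)

end BlockSubgroups

/-! ### The general linear group over a nonarchimedean field -/

section Nonarchimedean

theorem exists_blockwise_constant_units_norm_lt (E : Type*) [NontriviallyNormedField E]
    {ι α : Type*} [Finite ι] [LinearOrder α] (f : ι → α) :
    ∃ v : ι → Eˣ, (∀ i j, f i = f j → v i = v j) ∧
      ∀ i j, f i < f j → ‖(v i : E)‖ < ‖(v j : E)‖ := by
  have : Fintype ι := Fintype.ofFinite ι
  obtain ⟨c, hc0, hc1⟩ := NormedField.exists_norm_lt_one E
  refine ⟨fun i => Units.mk0 c (norm_pos_iff.1 hc0) ^ Finset.card {l | f i < f l},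
    fun i j hij => by simp only [hij], fun i j hij => ?_⟩
  have card_lt : Finset.card {l | f j < f l} < Finset.card {l | f i < f l} :=
    Finset.card_lt_card <| (Finset.ssubset_iff_of_subset fun l hl => by
      simp only [Finset.mem_filter_univ] at hl ⊢
      exact hij.trans hl).2 ⟨j, by simpa using hij, by simp⟩
  simpa using pow_lt_pow_right_of_lt_one₀ hc0 hc1 card_lt

variable {E ι α : Type*} [NontriviallyNormedField E] [Fintype ι] [DecidableEq ι] [LinearOrder α]

theorem tendsto_coe_diagonalGL_pow_conj {f : ι → α} {v : ι → Eˣ}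
    (hv : ∀ i j, f i = f j → v i = v j) (hlt : ∀ i j, f i < f j → ‖(v i : E)‖ < ‖(v j : E)‖)
    {u : GL ι E} (hu : u ∈ unipotentRadical E f) :
    Tendsto (fun N : ℕ => ((diagonalGL v ^ N * u * (diagonalGL v ^ N)⁻¹ : GL ι E) : Matrix ι ι E))
      atTop (𝓝 1) := by
  refine tendsto_pi_nhds.2 fun i => tendsto_pi_nhds.2 fun j => ?_
  simp only [diagonalGL_pow_conj_apply]
  rcases lt_trichotomy (f i) (f j) with hij | hij | hij
  · have norm_ratio_lt_one : ‖((v i / v j : Eˣ) : E)‖ < 1 := by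
      rw [Units.val_div_eq_div_val, norm_div, div_lt_one (norm_pos_iff.2 (v j).ne_zero)]
      exact hlt i j hij
    rw [one_apply_ne (ne_of_apply_ne f hij.ne)]
    simpa using (tendsto_pow_atTop_nhds_zero_of_norm_lt_one norm_ratio_lt_one).mul_const
      ((u : Matrix ι ι E) i j)
  · simp [hv i j hij, hu.2 i j hij]
  · simp [hu.1 hij, one_apply_ne (ne_of_apply_ne f hij.ne')]

theorem tendsto_diagonalGL_pow_conj {f : ι → α} {v : ι → Eˣ}
    (hv : ∀ i j, f i = f j → v i = v j) (hlt : ∀ i j, f i < f j → ‖(v i : E)‖ < ‖(v j : E)‖)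
    {u : GL ι E} (hu : u ∈ unipotentRadical E f) :
    Tendsto (fun N : ℕ => diagonalGL v ^ N * u * (diagonalGL v ^ N)⁻¹) atTop (𝓝 1) := by
  rw [Units.isInducing_embedProduct.tendsto_nhds_iff]
  refine (tendsto_coe_diagonalGL_pow_conj hv hlt hu).prodMk_nhds
    ((MulOpposite.continuous_op.tendsto _).comp ?_)
  simpa [mul_assoc] using tendsto_coe_diagonalGL_pow_conj hv hlt (inv_mem hu)

variable [IsUltrametricDist E]

/-- The subgroup `GL(𝒪)` of integral matrices with integral inverse, `𝒪` being the closed unit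
ball of `E`. -/
noncomputable def integralGL (ι E : Type*) [Fintype ι] [DecidableEq ι] [NontriviallyNormedField E]
    [IsUltrametricDist E] : Subgroup (GL ι E) :=
  (NormedField.valuation (K := E)).integer.matrix.toSubmonoid.units

theorem coe_integer_eq_closedBall :
    ((NormedField.valuation (K := E)).integer : Set E) = Metric.closedBall 0 1 := by
  ext x
  simp [Valuation.mem_integer_iff, ← NNReal.coe_le_coe]

theorem isOpen_integralGL : IsOpen (integralGL ι E : Set (GL ι E)) := by
  apply Submonoid.isOpen_units
  change IsOpen ((NormedField.valuation (K := E)).integer : Set E).matrix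
  rw [coe_integer_eq_closedBall]
  exact (IsUltrametricDist.isOpen_closedBall (0 : E) one_ne_zero).matrix

theorem isCompact_integralGL [ProperSpace E] : IsCompact (integralGL ι E : Set (GL ι E)) := by
  apply Submonoid.units_isCompact
  change IsCompact ((NormedField.valuation (K := E)).integer : Set E).matrix
  rw [coe_integer_eq_closedBall]
  exact (isCompact_closedBall (0 : E) 1).matrix

theorem stmt2_general [ProperSpace E] {k V : Type*} [Semiring k] [AddCommMonoid V] [Module k V]
    (f : ι → α) {P : Subgroup (GL ι E)} (hLP : leviSubgroup E f ≤ P) {ρ : Representation k P V}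
    (hsmooth : IsSmoothRepresentation ρ)
    (hadm : IsAdmissibleRepresentation (ρ.comp (Subgroup.inclusion hLP)))
    {g : P} (hg : (g : GL ι E) ∈ unipotentRadical E f) (x : V) : ρ g x = x := by
  obtain ⟨v, hv, hlt⟩ := exists_blockwise_constant_units_norm_lt E f
  have inclusion_continuous : Continuous (Subgroup.inclusion hLP) :=
    continuous_subtype_val.subtype_mk _
  have integral_open : IsOpen ((integralGL ι E).subgroupOf (leviSubgroup E f) :
      Set (leviSubgroup E f)) :=
    isOpen_integralGL.preimage continuous_subtype_val
  have integral_compact : IsCompact ((integralGL ι E).subgroupOf (leviSubgroup E f) :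
      Set (leviSubgroup E f)) :=
    (isClosed_leviSubgroup f).isClosedEmbedding_subtypeVal.isCompact_preimage isCompact_integralGL
  refine apply_eq_self_of_admissible_comp_of_tendsto_conj hsmooth inclusion_continuous hadm
    integral_open integral_compact (diagonalGL_mem_center_leviSubgroup hv) ?_ x
  exact IsInducing.subtypeVal.tendsto_nhds_iff.2 (tendsto_diagonalGL_pow_conj hv hlt hg)

end Nonarchimedean

/-- Fix a prime `p`, `n ≥ 1` and a composition of `n` (encoded by the monotone surjective block-index
map `f : Fin n → Fin r`).  Let `P ≤ GL_n(ℚ_p)` be the corresponding standard parabolic of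
block upper triangular matrices, `L ≤ P` its Levi of block diagonal matrices and `U` its
unipotent radical (block upper triangular with identity diagonal blocks).  Let `F/ℚ_p` be a
finite extension `K` with ring of integers `𝒪 = integralClosure ℤ_[p] K` and uniformizer `ϖ`
(an irreducible element of `𝒪`), and `h ≥ 1`.  Let `π` be a smooth representation of `P` on an
`𝒪/ϖ^h`-module which, as a representation of `L`, is admissible and of finite length (as a
module over the group algebra).  Then `U` acts trivially on `π`. -/
theorem stmt2 (p : ℕ) [Fact p.Prime] (n r : ℕ) (hn : 1 ≤ n)
    (f : Fin n → Fin r) (hmono : Monotone f) (hsurj : Function.Surjective f)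
    (P L U : Subgroup (GL (Fin n) ℚ_[p]))
    (hP : ∀ g : GL (Fin n) ℚ_[p], g ∈ P ↔
      Matrix.BlockTriangular (g : Matrix (Fin n) (Fin n) ℚ_[p]) f)
    (hL : ∀ g : GL (Fin n) ℚ_[p], g ∈ L ↔
      ∀ i j : Fin n, f i ≠ f j → (g : Matrix (Fin n) (Fin n) ℚ_[p]) i j = 0)
    (hU : ∀ g : GL (Fin n) ℚ_[p], g ∈ U ↔
      (Matrix.BlockTriangular (g : Matrix (Fin n) (Fin n) ℚ_[p]) f ∧
        ∀ i j : Fin n, f i = f j → (g : Matrix (Fin n) (Fin n) ℚ_[p]) i j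
          = (1 : Matrix (Fin n) (Fin n) ℚ_[p]) i j))
    (hLP : L ≤ P)
    (K : Type*) [Field K] [Algebra ℚ_[p] K] [FiniteDimensional ℚ_[p] K]
    [Algebra ℤ_[p] K] [IsScalarTower ℤ_[p] ℚ_[p] K]
    (ϖ : integralClosure ℤ_[p] K) (hϖ : Irreducible ϖ) (h : ℕ) (hh : 1 ≤ h)
    (π : Type*) [AddCommGroup π]
    [Module ((integralClosure ℤ_[p] K) ⧸ Ideal.span {ϖ ^ h}) π]
    (ρ : Representation ((integralClosure ℤ_[p] K) ⧸ Ideal.span {ϖ ^ h}) P π)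
    -- `π` is a smooth representation of `P`: every vector has open stabilizer
    (hsmooth : ∀ x : π, IsOpen {g : P | ρ g x = x})
    -- the restriction of `π` to `L` is admissible: the fixed points of every compact open
    -- subgroup of `L` form a finitely generated `𝒪/ϖ^h`-module
    (hadm : ∀ Kc : Subgroup L, IsOpen (Kc : Set L) → IsCompact (Kc : Set L) →
      (⨅ g ∈ Kc, LinearMap.eqLocus ((ρ.comp (Subgroup.inclusion hLP)) g)
        LinearMap.id).FG)
    -- the restriction of `π` to `L` has finite length as a module over the group algebra
    (hfl : IsFiniteLength
      (MonoidAlgebra ((integralClosure ℤ_[p] K) ⧸ Ideal.span {ϖ ^ h}) L)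
      (Representation.asModule (ρ.comp (Subgroup.inclusion hLP)))) :
    ∀ g : P, (g : GL (Fin n) ℚ_[p]) ∈ U → ∀ x : π, ρ g x = x := by
  obtain rfl : L = leviSubgroup ℚ_[p] f :=
    Subgroup.ext fun g => (hL g).trans mem_leviSubgroup.symm
  obtain rfl : U = unipotentRadical ℚ_[p] f :=
    Subgroup.ext fun g => (hU g).trans mem_unipotentRadical.symm
  exact fun g hg x => stmt2_general f hLP hsmooth hadm hg x
end

section
/- Fix a prime p and an integer n ≥ 2. G := GL_n(ℚ_p) is the group of invertible n×n matrices over ℚ_p. B ≤ G is the subgroup of invertible upper triangular matrices, N the group of upper triangular unipotent matrices (1 on the diagonal, 0 below), N₀ := N ∩ GL_n(ℤ_p) the elements of N with all entries in ℤ_p, and w₀ the permutation matrix of the involution i ↦ n+1−i. Then for every n×n permutation matrix w the following equalities of subsets of G hold: w₀⁻¹w⁻¹N₀wB = (N₀w₀B) ∩ (w₀⁻¹w⁻¹NwB) = (N₀ ∩ w₀⁻¹w⁻¹N₀ww₀)·w₀·B. (Equivalently, writing 𝒞₀^w := N₀wB/B, 𝒞^w := NwB/B, 𝒞₀ := N₀w₀B/B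 for subsets of the flag variety G/B and N_{0,v} := N₀ ∩ vN₀v⁻¹, one has w₀⁻¹w⁻¹𝒞₀^w = 𝒞₀ ∩ w₀⁻¹w⁻¹𝒞^w = N_{0,w₀⁻¹w⁻¹}w₀B/B.) -/
open scoped Pointwise

/-!
Put `q = ww₀`. Since `w₀² = 1`, the translated cell `w₀⁻¹w⁻¹N₀wB` is `q⁻¹N₀q · w₀B`, where `q⁻¹N₀q`
is the integral unitriangular group for the ordering of the indices permuted by `q`. By column
elimination every `m` in this group has a lower triangular `c` in the same group such that `mc` is
upper unitriangular as well. As `w₀` conjugates lower triangular matrices into `B`, the factor `c`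
is absorbed by `B`, so `q⁻¹N₀q · w₀B = (N₀ ∩ q⁻¹N₀q) · w₀B`. The same holds with `N` in place of
`N₀`. Finally an upper unitriangular matrix that is also lower triangular is `1`, so `x ↦ xw₀B` is
injective on `N`, and intersecting subsets of the big cell amounts to intersecting subsets of `N`.
-/

open DoubleCoset (doubleCoset mem_doubleCoset)

section DoubleCosets

variable {G : Type*} [Group G] {N B : Subgroup G} {v w : G} {X Y Z : Set G}

theorem doubleCoset_mono_left (hXY : X ⊆ Y) : doubleCoset w X Z ⊆ doubleCoset w Y Z :=
  Set.mul_subset_mul_right (Set.mul_subset_mul_right hXY)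

theorem singleton_mul_doubleCoset :
    {v} * doubleCoset w X Z = doubleCoset (v * w) ((fun x ↦ v * x * v⁻¹) '' X) Z := by
  ext g
  simp [mem_doubleCoset, mul_assoc, ← inv_mul_eq_iff_eq_mul]

theorem doubleCoset_eq_of_exists_mul_mem (hYX : Y ⊆ X)
    (hX : ∀ x ∈ X, ∃ c, w⁻¹ * c * w ∈ B ∧ x * c ∈ Y) :
    doubleCoset w X B = doubleCoset w Y B := by
  refine Set.Subset.antisymm (fun g hg ↦ ?_) (doubleCoset_mono_left hYX)
  obtain ⟨x, hx, b, hb, rfl⟩ := mem_doubleCoset.mp hg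
  obtain ⟨c, hc, hxc⟩ := hX x hx
  exact mem_doubleCoset.mpr
    ⟨x * c, hxc, (w⁻¹ * c * w)⁻¹ * b, B.mul_mem (B.inv_mem hc) hb, by group⟩

theorem doubleCoset_inter_doubleCoset (hXN : X ⊆ N) (hYN : Y ⊆ N)
    (hNB : ∀ g ∈ N, w⁻¹ * g * w ∈ B → g = 1) :
    doubleCoset w X B ∩ doubleCoset w Y B = doubleCoset w (X ∩ Y) B := by
  refine Set.Subset.antisymm (fun g hg ↦ ?_) (Set.subset_inter
    (doubleCoset_mono_left Set.inter_subset_left) (doubleCoset_mono_left Set.inter_subset_right))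
  obtain ⟨x, hx, b, hb, rfl⟩ := mem_doubleCoset.mp hg.1
  obtain ⟨y, hy, b', hb', hxy⟩ := mem_doubleCoset.mp hg.2
  have hconj : w⁻¹ * (y⁻¹ * x) * w = b' * b⁻¹ := by
    rw [eq_mul_inv_iff_mul_eq]
    calc w⁻¹ * (y⁻¹ * x) * w * b = w⁻¹ * y⁻¹ * (x * w * b) := by group
      _ = b' := by rw [hxy]; group
  have hyx : y⁻¹ * x = 1 := hNB _ (N.mul_mem (N.inv_mem (hYN hy)) (hXN hx)) <|
    hconj ▸ B.mul_mem hb' (B.inv_mem hb)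
  obtain rfl : y = x := inv_mul_eq_one.mp hyx
  exact mem_doubleCoset.mpr ⟨y, ⟨hx, hy⟩, b, hb, rfl⟩

end DoubleCosets

variable {ι κ α β R : Type*} [CommRing R]

section SubringEntries

variable [Fintype ι] [DecidableEq ι] {S : Subring R} {A : Matrix ι ι R}

theorem adjugate_mem_subring_matrix (hA : A ∈ S.matrix) : A.adjugate ∈ S.matrix := by
  obtain ⟨A', rfl⟩ : ∃ A' : Matrix ι ι S, S.subtype.mapMatrix A' = A :=
    ⟨fun i j ↦ ⟨A i j, hA i j⟩, rfl⟩
  rw [← RingHom.map_adjugate]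
  exact fun i j ↦ (A'.adjugate i j).2

theorem mulVec_mem_subring (hA : A ∈ S.matrix) {v : ι → R} (hv : ∀ i, v i ∈ S) (i : ι) :
    (A.mulVec v) i ∈ S :=
  S.sum_mem fun j _ ↦ S.mul_mem (hA i j) (hv j)

theorem exists_mulVec_eq_zero_on (hA : A ∈ S.matrix) (p : ι → Prop) [DecidablePred p]
    (hdet : (A.toSquareBlockProp p).det = 1) {v : ι → R} (hv : ∀ i, v i ∈ S) :
    ∃ c : ι → R, (∀ i, c i ∈ S) ∧ (∀ i, ¬ p i → c i = v i) ∧ ∀ i, p i → A.mulVec c i = 0 := by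
  set A' := A.toSquareBlockProp p
  have hA' : A' ∈ S.matrix := fun i j ↦ hA i j
  let y : {i // p i} → R := A'.adjugate.mulVec fun i ↦ A.mulVec v i
  have hy (i) : y i ∈ S :=
    mulVec_mem_subring (adjugate_mem_subring_matrix hA') (fun i ↦ mulVec_mem_subring hA hv i) i
  let x : ι → R := fun i ↦ if h : p i then y ⟨i, h⟩ else 0
  have hx (i) : x i ∈ S := by
    by_cases h : p i <;> simp [x, h, hy]
  have hAx (i) (hi : p i) : A.mulVec x i = A.mulVec v i := by
    calc A.mulVec x i = A'.mulVec y ⟨i, hi⟩ := by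
          simp only [Matrix.mulVec, dotProduct, A', Matrix.toSquareBlockProp_def, Matrix.of_apply]
          rw [← Fintype.sum_subtype_add_sum_subtype p]
          have hnot (k : {k // ¬ p k}) : x k = 0 := dif_neg k.2
          have hp (k : {k // p k}) : x k = y k := dif_pos k.2
          simp [hnot, hp]
      _ = A.mulVec v i := by
          simp [y, Matrix.mulVec_mulVec, Matrix.mul_adjugate, hdet]
  refine ⟨v - x, fun i ↦ S.sub_mem (hv i) (hx i), fun i hi ↦ ?_, fun i hi ↦ ?_⟩
  · simp [x, hi]
  · rw [Matrix.mulVec_sub, Pi.sub_apply, hAx i hi, sub_self]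

end SubringEntries

/-- `A` is block triangular with identity diagonal blocks, the blocks being the fibres of `b`. For
injective `b` this means unitriangular with respect to the ordering of the indices given by `b`. -/
def IsBlockUnitriangular [LE α] [DecidableEq ι] (b : ι → α) (A : Matrix ι ι R) : Prop :=
  ∀ ⦃i j⦄, b j ≤ b i → A i j = (1 : Matrix ι ι R) i j

namespace IsBlockUnitriangular

variable [LinearOrder α] [DecidableEq ι] {b : ι → α} {A A' : Matrix ι ι R}

theorem blockTriangular (hA : IsBlockUnitriangular b A) : A.BlockTriangular b := by
  intro i j hij
  rw [hA hij.le, Matrix.one_apply_ne]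
  rintro rfl
  exact hij.false

theorem apply_self (hA : IsBlockUnitriangular b A) (i : ι) : A i i = 1 := by
  rw [hA le_rfl, Matrix.one_apply_eq]

theorem submatrix [DecidableEq κ] (hA : IsBlockUnitriangular b A) {f : κ → ι}
    (hf : f.Injective) : IsBlockUnitriangular (b ∘ f) (A.submatrix f f) := fun i j hij ↦ by
  simp [hA hij, Matrix.one_apply, hf.eq_iff]

theorem eq_one_of_blockTriangular_toDual (hA : IsBlockUnitriangular b A)
    (hA' : A.BlockTriangular (OrderDual.toDual ∘ b)) : A = 1 := by
  ext i j
  rcases le_or_gt (b j) (b i) with hij | hij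
  · exact hA hij
  · rw [hA' hij, Matrix.one_apply_ne]
    rintro rfl
    exact hij.false

variable [Fintype ι]

theorem mul_apply_of_le (hA' : IsBlockUnitriangular b A') (hA : A.BlockTriangular b) {i j : ι}
    (hij : b j ≤ b i) : (A * A') i j = A i j := by
  rw [Matrix.mul_apply, Finset.sum_eq_single_of_mem j (Finset.mem_univ j), hA'.apply_self, mul_one]
  intro k _ hkj
  rcases le_or_gt (b j) (b k) with hjk | hkj'
  · rw [hA' hjk, Matrix.one_apply_ne hkj, mul_zero]
  · rw [hA (hkj'.trans_le hij), zero_mul]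

theorem mul (hA : IsBlockUnitriangular b A) (hA' : IsBlockUnitriangular b A') :
    IsBlockUnitriangular b (A * A') := fun _ _ hij ↦ by
  rw [hA'.mul_apply_of_le hA.blockTriangular hij, hA hij]

theorem det_eq_one (hA : IsBlockUnitriangular b A) : A.det = 1 := by
  rw [hA.blockTriangular.det]
  refine Finset.prod_eq_one fun a _ ↦ ?_
  suffices A.toSquareBlock b a = 1 by rw [this, Matrix.det_one]
  ext i j
  simp [Matrix.toSquareBlock_def, hA (j.2.trans i.2.symm).le, Matrix.one_apply, Subtype.ext_iff]

theorem inv (hA : IsBlockUnitriangular b A) : IsBlockUnitriangular b A⁻¹ := by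
  intro i j hij
  have hdet : IsUnit A.det := by simp [hA.det_eq_one]
  let := A.invertibleOfIsUnitDet hdet
  have hinv := Matrix.blockTriangular_inv_of_blockTriangular hA.blockTriangular
  rw [← hA.mul_apply_of_le hinv hij, Matrix.nonsing_inv_mul A hdet]

theorem inv_mem_subring_matrix (hA : IsBlockUnitriangular b A) {S : Subring R}
    (hAS : A ∈ S.matrix) : A⁻¹ ∈ S.matrix := by
  simpa [Matrix.inv_def, hA.det_eq_one] using adjugate_mem_subring_matrix hAS

/-- Column `j` of `C` is the `j`-th unit vector, corrected on the indices `i` with `b i < b j` and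
`b' j ≤ b' i` so as to annihilate the entries of `A * C` there. -/
theorem exists_mul_isBlockUnitriangular [LinearOrder β] (hA : IsBlockUnitriangular b A)
    {S : Subring R} (hAS : A ∈ S.matrix) (b' : ι → β) :
    ∃ C ∈ S.matrix, IsBlockUnitriangular b C ∧ C.BlockTriangular (OrderDual.toDual ∘ b') ∧
      IsBlockUnitriangular b' (A * C) := by
  have exists_column (j : ι) :
      ∃ c : ι → R, (∀ i, c i ∈ S) ∧
        (∀ i, ¬ (b i < b j ∧ b' j ≤ b' i) → c i = (1 : Matrix ι ι R) i j) ∧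
        ∀ i, b i < b j ∧ b' j ≤ b' i → A.mulVec c i = 0 :=
    exists_mulVec_eq_zero_on hAS _ (hA.submatrix Subtype.val_injective).det_eq_one
      fun i ↦ S.matrix.one_mem i j
  choose c hcS hc hAc using exists_column
  let C : Matrix ι ι R := Matrix.of fun i j ↦ c j i
  have hC : IsBlockUnitriangular b C := fun i j hij ↦ hc j i fun h ↦ h.1.not_ge hij
  refine ⟨C, fun i j ↦ hcS j i, hC, fun i j hij ↦ ?_, fun i j hij ↦ ?_⟩
  · have hij' : b' i < b' j := hij
    rw [show C i j = _ from hc j i fun h ↦ h.2.not_gt hij', Matrix.one_apply_ne]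
    rintro rfl
    exact hij'.false
  · rcases le_or_gt (b j) (b i) with hji | hji
    · exact (hA.mul hC) hji
    · rw [Matrix.one_apply_ne (by rintro rfl; exact hji.false)]
      exact hAc j i ⟨hji, hij⟩

end IsBlockUnitriangular

section Subgroups

variable [LinearOrder α] [Fintype ι] [DecidableEq ι]

variable (R) in
/-- The invertible block triangular matrices, a parabolic subgroup of `GL ι R`; for `b = id` it is
the subgroup `B` of upper triangular matrices. -/
def blockTriangularSubgroup (b : ι → α) : Subgroup (GL ι R) where
  carrier := {g | (g : Matrix ι ι R).BlockTriangular b}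
  one_mem' := Matrix.blockTriangular_one
  mul_mem' hg hh := hg.mul hh
  inv_mem' {g} hg := by
    let := g.invertible
    simpa only [Set.mem_ofPred_eq, Matrix.coe_units_inv] using
      Matrix.blockTriangular_inv_of_blockTriangular hg

/-- The block unitriangular matrices with entries in `S`; for `b = id` it is the subgroup `N₀`, or
`N` if `S = ⊤`. -/
def blockUnitriangularSubgroup (S : Subring R) (b : ι → α) : Subgroup (GL ι R) where
  carrier := {g | IsBlockUnitriangular b (g : Matrix ι ι R) ∧ (g : Matrix ι ι R) ∈ S.matrix}
  one_mem' := ⟨fun _ _ _ ↦ rfl, S.matrix.one_mem⟩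
  mul_mem' hg hh := ⟨hg.1.mul hh.1, S.matrix.mul_mem hg.2 hh.2⟩
  inv_mem' {g} hg := by
    simpa only [Set.mem_ofPred_eq, Matrix.coe_units_inv] using
      And.intro hg.1.inv (hg.1.inv_mem_subring_matrix hg.2)

variable {S : Subring R} {b : ι → α} {g : GL ι R}

theorem mem_blockTriangularSubgroup :
    g ∈ blockTriangularSubgroup R b ↔ (g : Matrix ι ι R).BlockTriangular b := Iff.rfl

theorem mem_blockUnitriangularSubgroup :
    g ∈ blockUnitriangularSubgroup S b ↔
      IsBlockUnitriangular b (g : Matrix ι ι R) ∧ (g : Matrix ι ι R) ∈ S.matrix := Iff.rfl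

theorem mem_blockUnitriangularSubgroup_of_injective (hb : b.Injective) :
    g ∈ blockUnitriangularSubgroup S b ↔
      ((∀ i j, b j < b i → (g : Matrix ι ι R) i j = 0) ∧ ∀ i, (g : Matrix ι ι R) i i = 1) ∧
        ∀ i j, (g : Matrix ι ι R) i j ∈ S := by
  refine and_congr_left fun _ ↦ ⟨fun hg ↦ ⟨fun _ _ h ↦ hg.blockTriangular h, hg.apply_self⟩, ?_⟩
  rintro ⟨hlt, hdiag⟩ i j hij
  rcases hij.lt_or_eq with hij | hij
  · rw [hlt i j hij, Matrix.one_apply_ne (by rintro rfl; exact hij.false)]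
  · rw [hb hij, hdiag, Matrix.one_apply_eq]

theorem blockUnitriangularSubgroup_le_top :
    blockUnitriangularSubgroup S b ≤ blockUnitriangularSubgroup ⊤ b :=
  fun _ hg ↦ ⟨hg.1, fun _ _ ↦ Subring.mem_top _⟩

theorem blockUnitriangularSubgroup_inf_top [LinearOrder β] (b' : ι → β) :
    blockUnitriangularSubgroup S b ⊓ blockUnitriangularSubgroup ⊤ b' =
      blockUnitriangularSubgroup S b ⊓ blockUnitriangularSubgroup S b' :=
  le_antisymm (fun _ hg ↦ ⟨hg.1, hg.2.1, hg.1.2⟩)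
    (inf_le_inf_left _ blockUnitriangularSubgroup_le_top)

theorem exists_mul_mem_blockUnitriangularSubgroup_inf [LinearOrder β]
    (hg : g ∈ blockUnitriangularSubgroup S b) (b' : ι → β) :
    ∃ c ∈ blockTriangularSubgroup R (OrderDual.toDual ∘ b'),
      g * c ∈ blockUnitriangularSubgroup S b' ⊓ blockUnitriangularSubgroup S b := by
  obtain ⟨C, hCS, hC, hClower, hgC⟩ := hg.1.exists_mul_isBlockUnitriangular hg.2 b'
  let c : GL ι R := Matrix.GeneralLinearGroup.mk'' C (by simp [hC.det_eq_one])
  have hcS : c ∈ blockUnitriangularSubgroup S b := ⟨hC, hCS⟩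
  have hgc := (blockUnitriangularSubgroup S b).mul_mem hg hcS
  exact ⟨c, hClower, ⟨hgC, hgc.2⟩, hgc⟩

end Subgroups

section PermutationMatrices

variable [Fintype ι] [DecidableEq ι]

variable (R) in
/-- The permutation matrix of `σ` as an element of `GL ι R`, with the convention that it sends the
basis vector `e j` to `e (σ j)`, so that `σ ↦ permGL R σ` is multiplicative. -/
def permGL : Equiv.Perm ι →* GL ι R := Matrix.permMatrixHom.toHomUnits

theorem permGL_apply (σ : Equiv.Perm ι) (i j : ι) :
    (permGL R σ : Matrix ι ι R) i j = if i = σ j then 1 else 0 := by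
  simp [permGL, PEquiv.toMatrix_apply, Equiv.Perm.inv_def, Equiv.symm_apply_eq]

theorem eq_permGL_iff {σ : Equiv.Perm ι} {g : GL ι R} :
    g = permGL R σ ↔ ∀ i j, (g : Matrix ι ι R) i j = if i = σ j then 1 else 0 := by
  simp only [Matrix.GeneralLinearGroup.ext_iff, permGL_apply]

theorem coe_permGL_inv_mul_mul (σ : Equiv.Perm ι) (g : GL ι R) :
    (((permGL R σ)⁻¹ * g * permGL R σ : GL ι R) : Matrix ι ι R) =
      (g : Matrix ι ι R).submatrix σ σ := by
  ext i j
  rw [← map_inv]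
  simp [Matrix.mul_apply, permGL_apply, Equiv.Perm.inv_def, Equiv.eq_symm_apply]

variable [LinearOrder α]

theorem permGL_conj_mem_blockTriangularSubgroup {σ : Equiv.Perm ι} {b : ι → α} {g : GL ι R} :
    (permGL R σ)⁻¹ * g * permGL R σ ∈ blockTriangularSubgroup R b ↔
      g ∈ blockTriangularSubgroup R (b ∘ σ.symm) := by
  rw [mem_blockTriangularSubgroup, coe_permGL_inv_mul_mul, mem_blockTriangularSubgroup]
  refine ⟨fun h ↦ ?_, fun h ↦ ?_⟩
  · simpa using h.submatrix (f := σ.symm)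
  · simpa [Function.comp_assoc] using h.submatrix (f := σ)

theorem image_permGL_conj_blockUnitriangularSubgroup (S : Subring R) (b : ι → α)
    (σ : Equiv.Perm ι) :
    (fun g ↦ (permGL R σ)⁻¹ * g * permGL R σ) '' blockUnitriangularSubgroup S b =
      blockUnitriangularSubgroup S (b ∘ σ) := by
  have conj_mem {b : ι → α} {g : GL ι R} (σ : Equiv.Perm ι)
      (hg : g ∈ blockUnitriangularSubgroup S b) :
      (permGL R σ)⁻¹ * g * permGL R σ ∈ blockUnitriangularSubgroup S (b ∘ σ) := by
    rw [mem_blockUnitriangularSubgroup, coe_permGL_inv_mul_mul]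
    exact ⟨hg.1.submatrix σ.injective, fun i j ↦ hg.2 (σ i) (σ j)⟩
  refine Set.Subset.antisymm (Set.image_subset_iff.mpr fun g hg ↦ conj_mem σ hg) fun g hg ↦ ?_
  refine ⟨permGL R σ * g * (permGL R σ)⁻¹, ?_, by group⟩
  simpa [Function.comp_assoc] using conj_mem σ⁻¹ hg

end PermutationMatrices

section BigCell

variable {n : ℕ}

variable (R n) in
/-- The Borel subgroup `B` of invertible upper triangular matrices. -/
abbrev borelSubgroup : Subgroup (GL (Fin n) R) := blockTriangularSubgroup R id

variable (n) in
/-- The group `N₀` of upper unitriangular matrices with entries in `S`; `N` is the case `S = ⊤`. -/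
abbrev unipotentSubgroup (S : Subring R) : Subgroup (GL (Fin n) R) :=
  blockUnitriangularSubgroup S id

variable (R n) in
/-- The antidiagonal permutation matrix `w₀`, representing the longest element of the Weyl group. -/
abbrev longestWeyl : GL (Fin n) R := permGL R Fin.revPerm

theorem longestWeyl_inv : (longestWeyl R n)⁻¹ = longestWeyl R n := by
  rw [← map_inv]
  rfl

theorem longestWeyl_conj_mem_borelSubgroup {g : GL (Fin n) R} :
    (longestWeyl R n)⁻¹ * g * longestWeyl R n ∈ borelSubgroup R n ↔
      g ∈ blockTriangularSubgroup R (OrderDual.toDual ∘ id) := by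
  rw [permGL_conj_mem_blockTriangularSubgroup]
  simp [mem_blockTriangularSubgroup, Matrix.BlockTriangular]

theorem doubleCoset_longestWeyl_blockUnitriangularSubgroup [LinearOrder α] (S : Subring R)
    (b : Fin n → α) :
    doubleCoset (longestWeyl R n) (blockUnitriangularSubgroup S b) (borelSubgroup R n) =
      doubleCoset (longestWeyl R n) ↑(unipotentSubgroup n S ⊓ blockUnitriangularSubgroup S b)
        (borelSubgroup R n) := by
  refine doubleCoset_eq_of_exists_mul_mem inf_le_right fun g hg ↦ ?_
  obtain ⟨c, hc, hgc⟩ := exists_mul_mem_blockUnitriangularSubgroup_inf hg id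
  exact ⟨c, longestWeyl_conj_mem_borelSubgroup.mpr hc, hgc⟩

theorem image_conj_unipotentSubgroup (S : Subring R) (σ : Equiv.Perm (Fin n)) :
    (fun x ↦ (longestWeyl R n)⁻¹ * (permGL R σ)⁻¹ * x * (permGL R σ * longestWeyl R n)) ''
        unipotentSubgroup n S =
      blockUnitriangularSubgroup S (σ ∘ Fin.rev) := by
  have hrev : σ ∘ Fin.rev = id ∘ ⇑(σ * Fin.revPerm : Equiv.Perm (Fin n)) := rfl
  rw [hrev, ← image_permGL_conj_blockUnitriangularSubgroup, map_mul,
    mul_inv_rev]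

theorem singleton_mul_doubleCoset_permGL_unipotentSubgroup (S : Subring R)
    (σ : Equiv.Perm (Fin n)) :
    {(longestWeyl R n)⁻¹ * (permGL R σ)⁻¹} *
        doubleCoset (permGL R σ) (unipotentSubgroup n S) (borelSubgroup R n) =
      doubleCoset (longestWeyl R n)
        ↑(unipotentSubgroup n S ⊓ blockUnitriangularSubgroup S (σ ∘ Fin.rev))
        (borelSubgroup R n) := by
  rw [singleton_mul_doubleCoset, inv_mul_cancel_right, longestWeyl_inv,
    ← doubleCoset_longestWeyl_blockUnitriangularSubgroup]
  congr 1
  simpa [longestWeyl_inv] using image_conj_unipotentSubgroup S σ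

theorem doubleCoset_longestWeyl_unipotentSubgroup_inter [LinearOrder α] (S : Subring R)
    (b : Fin n → α) :
    doubleCoset (longestWeyl R n) (unipotentSubgroup n S) (borelSubgroup R n) ∩
        doubleCoset (longestWeyl R n)
          ↑(unipotentSubgroup n (⊤ : Subring R) ⊓ blockUnitriangularSubgroup ⊤ b)
          (borelSubgroup R n) =
      doubleCoset (longestWeyl R n) ↑(unipotentSubgroup n S ⊓ blockUnitriangularSubgroup S b)
        (borelSubgroup R n) := by
  rw [doubleCoset_inter_doubleCoset (N := unipotentSubgroup n ⊤)
    blockUnitriangularSubgroup_le_top (SetLike.coe_subset_coe.mpr inf_le_left),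
    ← Subgroup.coe_inf, ← inf_assoc,
    inf_eq_left.mpr blockUnitriangularSubgroup_le_top, blockUnitriangularSubgroup_inf_top]
  intro g hg hconj
  exact Units.ext <| hg.1.eq_one_of_blockTriangular_toDual <|
    longestWeyl_conj_mem_borelSubgroup.mp hconj

end BigCell

theorem stmt4_general {n : ℕ} (S : Subring R) (w w₀ : GL (Fin n) R) (σ : Equiv.Perm (Fin n))
    (hw : ∀ i j : Fin n, (w : Matrix (Fin n) (Fin n) R) i j = if i = σ j then 1 else 0)
    (hw₀ : ∀ i j : Fin n,
      (w₀ : Matrix (Fin n) (Fin n) R) i j = if i = Fin.rev j then 1 else 0)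
    (B N N₀ : Set (GL (Fin n) R))
    (hB : B = {g : GL (Fin n) R |
      ∀ i j : Fin n, j < i → (g : Matrix (Fin n) (Fin n) R) i j = 0})
    (hN : N = {g : GL (Fin n) R |
      (∀ i j : Fin n, j < i → (g : Matrix (Fin n) (Fin n) R) i j = 0) ∧
      ∀ i : Fin n, (g : Matrix (Fin n) (Fin n) R) i i = 1})
    (hN₀ : N₀ = N ∩ {g : GL (Fin n) R |
      ∀ i j : Fin n, (g : Matrix (Fin n) (Fin n) R) i j ∈ S}) :
    {w₀⁻¹ * w⁻¹} * (N₀ * {w} * B) =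
        (N₀ * {w₀} * B) ∩ ({w₀⁻¹ * w⁻¹} * (N * {w} * B)) ∧
    {w₀⁻¹ * w⁻¹} * (N₀ * {w} * B) =
        (N₀ ∩ ((fun x => (w₀⁻¹ * w⁻¹) * x * (w * w₀)) '' N₀)) * {w₀} * B := by
  obtain rfl := eq_permGL_iff.mpr hw
  obtain rfl : w₀ = longestWeyl R n := eq_permGL_iff.mpr hw₀
  obtain rfl : B = borelSubgroup R n := hB
  obtain rfl : N₀ = unipotentSubgroup n S := by
    ext g
    simp [hN₀, hN, mem_blockUnitriangularSubgroup_of_injective Function.injective_id]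
  obtain rfl : N = unipotentSubgroup n (⊤ : Subring R) := by
    ext g
    simp [hN, mem_blockUnitriangularSubgroup_of_injective Function.injective_id]
  simp only [image_conj_unipotentSubgroup, ← Subgroup.coe_inf, ← doubleCoset.eq_1,
    singleton_mul_doubleCoset_permGL_unipotentSubgroup,
    doubleCoset_longestWeyl_unipotentSubgroup_inter, and_self]

set_option maxHeartbeats 1000000 in
set_option synthInstance.maxHeartbeats 200000 in
/-- Fix a prime `p` and `n ≥ 2`.  In `G = GL_n(ℚ_p)` let `B` be the invertible upper triangular
matrices, `N` the upper triangular unipotent matrices, `N₀ = N ∩ GL_n(ℤ_p)`, `w₀` the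
permutation matrix of `i ↦ n+1-i`, and `w` any permutation matrix.  Then
`w₀⁻¹w⁻¹N₀wB = (N₀w₀B) ∩ (w₀⁻¹w⁻¹NwB) = (N₀ ∩ w₀⁻¹w⁻¹N₀ww₀)·w₀·B` as subsets of `G`
(products being pointwise products of subsets). -/
theorem stmt4 (p : ℕ) [Fact p.Prime] (n : ℕ) (hn : 2 ≤ n)
    (w w₀ : GL (Fin n) ℚ_[p]) (σ : Equiv.Perm (Fin n))
    (hw : ∀ i j : Fin n, (w : Matrix (Fin n) (Fin n) ℚ_[p]) i j = if i = σ j then 1 else 0)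
    (hw₀ : ∀ i j : Fin n,
      (w₀ : Matrix (Fin n) (Fin n) ℚ_[p]) i j = if i = Fin.rev j then 1 else 0)
    (B N N₀ : Set (GL (Fin n) ℚ_[p]))
    (hB : B = {g : GL (Fin n) ℚ_[p] |
      ∀ i j : Fin n, j < i → (g : Matrix (Fin n) (Fin n) ℚ_[p]) i j = 0})
    (hN : N = {g : GL (Fin n) ℚ_[p] |
      (∀ i j : Fin n, j < i → (g : Matrix (Fin n) (Fin n) ℚ_[p]) i j = 0) ∧
      ∀ i : Fin n, (g : Matrix (Fin n) (Fin n) ℚ_[p]) i i = 1})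
    (hN₀ : N₀ = N ∩ {g : GL (Fin n) ℚ_[p] |
      ∀ i j : Fin n, ‖(g : Matrix (Fin n) (Fin n) ℚ_[p]) i j‖ ≤ 1}) :
    {w₀⁻¹ * w⁻¹} * (N₀ * {w} * B) =
        (N₀ * {w₀} * B) ∩ ({w₀⁻¹ * w⁻¹} * (N * {w} * B)) ∧
    {w₀⁻¹ * w⁻¹} * (N₀ * {w} * B) =
        (N₀ ∩ ((fun x => (w₀⁻¹ * w⁻¹) * x * (w * w₀)) '' N₀)) * {w₀} * B :=
  stmt4_general (PadicInt.subring p) w w₀ σ hw hw₀ B N N₀ hB hN hN₀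
end
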